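/- The sets R'_0, R'_1, R'_2, R'_3 partition G and form a three-class translation association scheme on the additive group of G: there exist natural numbers p^m_{k,l} for 0 ≤ k, l, m ≤ 3 such that for all k, l, m and every d ∈ R'_m, the number of z ∈ G with z ∈ R'_k and d + z ∈ R'_l equals p^m_{k,l} (note that in characteristic 2 one has d − z = d + z, so the relations are symmetric). -/

import Mathlib

noncomputable section

open scoped BigOperators

/-- `M = 2^{2s} + 2^s + 1`. -/
abbrev Mof (s : ℕ) : ℕ := 2 ^ (2 * s) + 2 ^ s + 1

/-- The relative trace from `F` (of order `2^{3s}`) to its subfield `E` of order `2^s`: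
`Tr_{F/E}(x) = x + x^{2^s} + x^{2^{2s}}`, viewed as a map `F → F`. -/
def trFE {F : Type*} [Field F] (s : ℕ) (x : F) : F :=
  x + x ^ (2 ^ s) + x ^ (2 ^ (2 * s))

/-- `ψ(x) = 1` if the absolute trace `Tr_{F/𝔽₂}(x) = 0`, and `-1` otherwise. -/
def psi (F : Type*) [Field F] [Algebra (ZMod 2) F] (x : F) : ℤ :=
  if Algebra.trace (ZMod 2) F x = 0 then 1 else -1

/-- `ψ(cS) = ∑_{x ∈ S} ψ(c·x)`. -/
def psiSum (F : Type*) [Field F] [Algebra (ZMod 2) F] (c : F) (S : Set F) : ℤ :=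
  ∑ᶠ x ∈ S, psi F (c * x)

/-- `D = {u ∈ F^× : Tr_{F/E}(u⁻¹) = 0}`. -/
def Dset (F : Type*) [Field F] (s : ℕ) : Set F :=
  {u | u ≠ 0 ∧ trFE s u⁻¹ = 0}

/-- `S_a = {u ∈ F^× : Tr_{F/E}(u^{2^s+1}) = 0 ∧ Tr_{F/E}(ω^a u) = 0}`. -/
def Sa {F : Type*} [Field F] (s : ℕ) (ω : F) (a : ℤ) : Set F :=
  {u | u ≠ 0 ∧ trFE s (u ^ (2 ^ s + 1)) = 0 ∧ trFE s (ω ^ a * u) = 0}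

/-- `T₁ ⊆ ℤ/Mℤ`: classes `a` with `|S_a| = 2^s - 1`. -/
def T1 {F : Type*} [Field F] (s : ℕ) (ω : F) : Set (ZMod (Mof s)) :=
  {x | (Sa s ω (x.val : ℤ)).ncard = 2 ^ s - 1}

/-- `T₂ ⊆ ℤ/Mℤ`: classes `a` with `|S_a| = 2(2^s - 1)`. -/
def T2 {F : Type*} [Field F] (s : ℕ) (ω : F) : Set (ZMod (Mof s)) :=
  {x | (Sa s ω (x.val : ℤ)).ncard = 2 * (2 ^ s - 1)}

/-- `T₃ ⊆ ℤ/Mℤ`: classes `a` with `|S_a| = 0`. -/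
def T3 {F : Type*} [Field F] (s : ℕ) (ω : F) : Set (ZMod (Mof s)) :=
  {x | (Sa s ω (x.val : ℤ)).ncard = 0}

/-- The cyclotomic class `C_i^{(M,K)} = {g^{i+Mt} : t ∈ ℤ}`. -/
def cyc {K : Type*} [Field K] (M : ℕ) (g : K) (i : ℤ) : Set K :=
  {x | ∃ t : ℤ, x = g ^ (i + (M : ℤ) * t)}

/-- `⋃_{i ∈ T} C_i^{(M,K)}` for a set `T ⊆ ℤ/Mℤ` of indices. -/
def Rclass {K : Type*} [Field K] (s : ℕ) (g : K) (T : Set (ZMod (Mof s))) : Set K :=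
  ⋃ i ∈ T, cyc (Mof s) g ((i.val : ℤ))

/-- The family `R_0 = {0}`, `R_k = ⋃_{i ∈ T_k} C_i^{(M,K)}`, `k = 1, 2, 3`. -/
def Rfam {F K : Type*} [Field F] [Field K] (s : ℕ) (ω : F) (g : K) : Fin 4 → Set K :=
  ![{0}, Rclass s g (T1 s ω), Rclass s g (T2 s ω), Rclass s g (T3 s ω)]

/-- Indicator `[P] = 1` if `P` holds, `0` otherwise. -/
def Ind (P : Prop) : ℤ := @ite ℤ P (Classical.propDecidable P) 1 0

/-!
Write `Z` for the set of `x` whose norm `N x ∈ F` has relative trace zero over `E`, `Y` for the set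
of `x` with `N x ∈ E`, and `J x = ∑ ψ (u⁻¹ * N x)`, the sum running over the `u ∈ F` of relative
trace zero. For each `c ≠ 0` the function `x ↦ ψ (c * N x)` is a quadratic phase, so its Fourier
transform is the multiple `-|F| ψ (-c⁻¹ * N x)` of the phase with parameter `-c⁻¹`. As `E` and the
kernel of the trace are orthogonal for the trace form, summing over `c` in these two subspaces
shows that the Fourier transform interchanges the spans of `{δ₀, 1, 1_Z, J}` and of `{δ₀, 1, 1_Z,
1_Y}`. Since `Z ∩ Y = {0}`, the second span is closed under pointwise multiplication, hence the
first is closed under cross-correlation. Finally `J x` is an affine function of the number of ways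
of writing `N x` as a product of two elements of relative trace zero. In the cubic extension `F/E`
of characteristic two this number is `0`, `q - 1` or `2 * (q - 1)` if `x ≠ 0`, and it is `q - 1`
exactly if `x ∈ Z`; the substitution `u ↦ u⁻¹` identifies it with `|S_a|`, so that the first span
consists of the functions that are constant on each of the classes.
-/

section CrossCorrelation

variable {ι K A : Type*} [Add A] [Fintype A]

/-- The cross-correlation of two functions on a finite additive structure. For indicator functions
of sets `R` and `S`, its value at `d` counts the `z ∈ R` with `d + z ∈ S`. -/
def crossCorrelation [Semiring K] (f g : A → K) (d : A) : K :=
  ∑ z, f z * g (d + z)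

theorem crossCorrelation_indicator [Semiring K] (R S : Set A) (d : A) :
    crossCorrelation (R.indicator (1 : A → K)) (S.indicator 1) d =
      ({z | z ∈ R ∧ d + z ∈ S}.ncard : K) := by
  classical
  have hmul (z : A) : R.indicator (1 : A → K) z * S.indicator 1 (d + z) =
      if z ∈ R ∧ d + z ∈ S then 1 else 0 := by
    simp only [Set.indicator_apply, Pi.one_apply, ite_and, ite_mul, one_mul, zero_mul]
  simp only [crossCorrelation, hmul, Finset.sum_boole, Set.ncard_eq_toFinset_card',
    Set.toFinset_ofPred]

theorem exists_intersectionNumbers [Semiring K] [CharZero K] {R : ι → Set A}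
    {W : Submodule K (A → K)} (hcorr : ∀ f ∈ W, ∀ g ∈ W, crossCorrelation f g ∈ W)
    (hind : ∀ k, (R k).indicator 1 ∈ W)
    (hconst : ∀ h ∈ W, ∀ m, ∀ d ∈ R m, ∀ d' ∈ R m, h d = h d') :
    ∃ p : ι → ι → ι → ℕ, ∀ k l m, ∀ d ∈ R m, {z | z ∈ R k ∧ d + z ∈ R l}.ncard = p k l m := by
  have hcount (k l m : ι) : ∃ n : ℕ, ∀ d ∈ R m, {z | z ∈ R k ∧ d + z ∈ R l}.ncard = n := by
    obtain hR | ⟨d', hd'⟩ := (R m).eq_empty_or_nonempty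
    · simp [hR]
    · refine ⟨{z | z ∈ R k ∧ d' + z ∈ R l}.ncard, fun d hd => Nat.cast_injective (R := K) ?_⟩
      simpa only [crossCorrelation_indicator] using
        hconst _ (hcorr _ (hind k) _ (hind l)) m d hd d' hd'
  choose p hp using hcount
  exact ⟨p, hp⟩

end CrossCorrelation

section FourierTransform

variable {K A : Type*} [Field K] [CommRing A] [Fintype A]

/-- The Fourier transform on the additive group of a finite commutative ring `A`; the character
group is identified with `A` by means of a (usually primitive) character `χ`. -/
def fourierTransform (χ : AddChar A K) : (A → K) →ₗ[K] (A → K) :=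
  Matrix.mulVecLin (Matrix.of fun b x => χ (b * x))

theorem fourierTransform_apply (χ : AddChar A K) (h : A → K) (b : A) :
    fourierTransform χ h b = ∑ x, χ (b * x) * h x :=
  rfl

theorem fourierTransform_indicator_zero (χ : AddChar A K) :
    fourierTransform χ (({0} : Set A).indicator 1) = 1 := by
  classical
  ext b
  simp [fourierTransform_apply, Pi.single_apply]

theorem fourierTransform_one {χ : AddChar A K} (hχ : χ.IsPrimitive) :
    fourierTransform χ 1 = (Fintype.card A : K) • ({0} : Set A).indicator 1 := by
  classical
  ext b
  simp [fourierTransform_apply, Pi.single_apply, mul_comm b, AddChar.sum_mulShift b hχ]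

theorem fourierTransform_fourierTransform {χ : AddChar A K} (hχ : χ.IsPrimitive) (h : A → K) :
    fourierTransform χ (fourierTransform χ h) = (Fintype.card A : K) • (h ∘ Neg.neg) := by
  classical
  ext b
  have hsum (x : A) : ∑ y, χ (b * y) * (χ (y * x) * h x) =
      if -b = x then (Fintype.card A : K) * h x else 0 := by
    have hshift (y : A) : χ (b * y) * (χ (y * x) * h x) = χ (y * (b + x)) * h x := by
      rw [← mul_assoc, ← AddChar.map_add_eq_mul]; ring_nf
    simp only [hshift, ← Finset.sum_mul, AddChar.sum_mulShift _ hχ, neg_eq_iff_add_eq_zero]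
    split_ifs <;> simp
  simp only [fourierTransform_apply, Finset.mul_sum]
  rw [Finset.sum_comm]
  simp [hsum]

theorem fourierTransform_crossCorrelation (χ : AddChar A K) (f g : A → K) :
    fourierTransform χ (crossCorrelation f g) =
      fourierTransform χ (f ∘ Neg.neg) * fourierTransform χ g := by
  ext b
  have hneg : fourierTransform χ (f ∘ Neg.neg) b = ∑ z, χ (-(b * z)) * f z := by
    rw [fourierTransform_apply, ← Equiv.sum_comp (Equiv.neg A)]
    simp
  have htranslate (z : A) : ∑ d, χ (b * d) * (f z * g (d + z)) =
      χ (-(b * z)) * f z * fourierTransform χ g b := by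
    have hshift : fourierTransform χ g b = ∑ d, χ (b * (d + z)) * g (d + z) :=
      (Equiv.sum_comp (Equiv.addRight z) fun e => χ (b * e) * g e).symm
    rw [hshift, Finset.mul_sum]
    refine Finset.sum_congr rfl fun d _ => ?_
    have hχ : χ (b * d) = χ (-(b * z)) * χ (b * (d + z)) := by
      rw [← AddChar.map_add_eq_mul]; ring_nf
    rw [hχ]
    ring
  rw [Pi.mul_apply, hneg, Finset.sum_mul, fourierTransform_apply]
  simp only [crossCorrelation, Finset.mul_sum]
  rw [Finset.sum_comm]
  exact Finset.sum_congr rfl fun z _ => htranslate z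

variable [CharZero K] {χ : AddChar A K} {W W' : Submodule K (A → K)}

theorem comp_neg_mem_of_fourierTransform_mem (hχ : χ.IsPrimitive)
    (hW : W ≤ W'.comap (fourierTransform χ)) (hW' : W' ≤ W.comap (fourierTransform χ))
    {f : A → K} (hf : f ∈ W) : f ∘ Neg.neg ∈ W := by
  have hcard : (Fintype.card A : K) ≠ 0 := Nat.cast_ne_zero.mpr Fintype.card_ne_zero
  rw [← W.smul_mem_iff hcard, ← fourierTransform_fourierTransform hχ]
  exact hW' (hW hf)

theorem crossCorrelation_mem_of_fourierTransform_mem (hχ : χ.IsPrimitive)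
    (hW : W ≤ W'.comap (fourierTransform χ)) (hW' : W' ≤ W.comap (fourierTransform χ))
    (hmul : W' * W' ≤ W') {f g : A → K} (hf : f ∈ W) (hg : g ∈ W) :
    crossCorrelation f g ∈ W := by
  have hneg {h : A → K} (hh : h ∈ W) : h ∘ Neg.neg ∈ W :=
    comp_neg_mem_of_fourierTransform_mem hχ hW hW' hh
  have hcard : (Fintype.card A : K) ≠ 0 := Nat.cast_ne_zero.mpr Fintype.card_ne_zero
  have htransform : fourierTransform χ (crossCorrelation f g) ∈ W' := by
    rw [fourierTransform_crossCorrelation]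
    exact hmul (Submodule.mul_mem_mul (hW (hneg hf)) (hW hg))
  have hdouble := hW' htransform
  rw [Submodule.mem_comap, fourierTransform_fourierTransform hχ, W.smul_mem_iff hcard] at hdouble
  simpa [Function.comp_def] using hneg hdouble

end FourierTransform

theorem span_indicator_mul_le {K A : Type*} [CommSemiring K] {𝓢 : Set (Set A)}
    (h𝓢 : ∀ S ∈ 𝓢, ∀ T ∈ 𝓢, S ∩ T ∈ 𝓢) :
    Submodule.span K ((fun S => S.indicator (1 : A → K)) '' 𝓢) *
      Submodule.span K ((fun S => S.indicator 1) '' 𝓢) ≤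
        Submodule.span K ((fun S => S.indicator 1) '' 𝓢) := by
  rw [Submodule.span_mul_span]
  refine Submodule.span_mono ?_
  rintro _ ⟨_, ⟨S, hS, rfl⟩, _, ⟨T, hT, rfl⟩, rfl⟩
  exact ⟨S ∩ T, h𝓢 S hS T hT, Set.inter_indicator_one⟩

theorem sum_eq_apply_zero_add_card_sub_one_mul {A K : Type*} [Fintype A] [Zero A] [CommRing K]
    {f : A → K} {c : K} (hf : ∀ a ≠ 0, f a = c) :
    ∑ a, f a = f 0 + ((Fintype.card A : K) - 1) * c := by
  classical
  rw [Fintype.sum_eq_add_sum_compl 0, Finset.sum_congr rfl fun a ha => hf a (by simpa using ha),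
    Finset.sum_const, Finset.card_compl, Finset.card_singleton, nsmul_eq_mul,
    Nat.cast_sub (Fintype.card_pos_iff.mpr ⟨0⟩), Nat.cast_one]

section TraceCharacter

/-- The pullback of an additive character of `A` to an `A`-algebra `B` along the trace. -/
def traceChar {A R : Type*} [CommRing A] [CommMonoid R] (B : Type*) [CommRing B] [Algebra A B]
    (ψ : AddChar A R) : AddChar B R :=
  ψ.compAddMonoidHom (Algebra.trace A B).toAddMonoidHom

theorem traceChar_apply {A R B : Type*} [CommRing A] [CommMonoid R] [CommRing B] [Algebra A B]
    (ψ : AddChar A R) (x : B) : traceChar B ψ x = ψ (Algebra.trace A B x) :=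
  rfl

variable {E F R : Type*} [Field E] [Field F] [Algebra E F]

theorem traceForm_orthogonal_one :
    (Algebra.traceForm E F).orthogonal 1 = LinearMap.ker (Algebra.trace E F) := by
  ext z
  simp only [LinearMap.BilinForm.mem_orthogonal_iff, LinearMap.mem_ker, Submodule.mem_one]
  constructor
  · intro h
    simpa using h 1 ⟨1, map_one _⟩
  · rintro h _ ⟨e, rfl⟩
    simp [← Algebra.smul_def, h]

theorem traceChar_isPrimitive [Finite F] [CommMonoid R] {ψ : AddChar E R} (hψ : ψ.IsPrimitive) :
    (traceChar F ψ).IsPrimitive := by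
  obtain ⟨e, he⟩ := AddChar.ne_one_iff.mp (hψ one_ne_zero)
  obtain ⟨x, rfl⟩ := Algebra.trace_surjective E F e
  exact AddChar.IsPrimitive.of_ne_one
    (AddChar.ne_one_iff.mpr ⟨x, by simpa [traceChar_apply] using he⟩)

theorem sum_traceChar_mul [CommRing R] [IsDomain R] {ψ : AddChar E R} (hψ : ψ.IsPrimitive)
    (U : Submodule E F) [Fintype U] (z : F) :
    ∑ u : U, traceChar F ψ (u * z) =
      ((Algebra.traceForm E F).orthogonal U : Set F).indicator
        (fun _ => (Fintype.card U : R)) z := by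
  by_cases hz : z ∈ (Algebra.traceForm E F).orthogonal U
  · have horth (u : U) : Algebra.trace E F (u * z) = 0 := hz u u.2
    simp [hz, traceChar_apply, horth]
  · have hne : ((traceChar F ψ).mulShift z).compAddMonoidHom U.subtype.toAddMonoidHom ≠ 1 := by
      simp only [LinearMap.BilinForm.mem_orthogonal_iff, not_forall] at hz
      obtain ⟨u, hu, huz⟩ := hz
      obtain ⟨e, he⟩ := AddChar.ne_one_iff.mp (hψ huz)
      refine AddChar.ne_one_iff.mpr ⟨e • ⟨u, hu⟩, ?_⟩
      simpa [traceChar_apply, AddChar.mulShift_apply, mul_comm z, mul_comm e] using he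
    simpa [hz, AddChar.mulShift_apply, mul_comm z] using AddChar.sum_eq_zero_of_ne_one hne

theorem traceForm_orthogonal_ker_trace [Finite F] :
    (Algebra.traceForm E F).orthogonal (LinearMap.ker (Algebra.trace E F)) = 1 := by
  rw [← traceForm_orthogonal_one, LinearMap.BilinForm.orthogonal_orthogonal
    (traceForm_nondegenerate E F) (Algebra.traceForm_isSymm E).isRefl]

end TraceCharacter

section NormPhase

variable {F G K S : Type*} [Field F] [Field G] [Algebra F G] [Field K] [SetLike S F]

/-- The quadratic phase `x ↦ ψ(c N(x))` attached to the norm of the extension `G/F`. -/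
def normPhase (G : Type*) [Field G] [Algebra F G] (ψ : AddChar F K) (c : F) (x : G) : K :=
  ψ (c * Algebra.norm F x)

/-- The sum of the phases `x ↦ ψ(u N(x))` over `u ∈ U`. -/
def normPhaseSum (G : Type*) [Field G] [Algebra F G] (ψ : AddChar F K) (U : S) [Fintype U] :
    G → K :=
  ∑ u : U, normPhase G ψ u

/-- The sum of the phases `x ↦ ψ(u⁻¹ N(x))` over `u ∈ U`; the term `u = 0` contributes `1`, because
of the convention `0⁻¹ = 0`. -/
def normPhaseInvSum (G : Type*) [Field G] [Algebra F G] (ψ : AddChar F K) (U : S) [Fintype U] :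
    G → K :=
  ∑ u : U, normPhase G ψ (u : F)⁻¹

theorem normPhaseInvSum_eq_normPhaseSum (ψ : AddChar F K) {U : S} [Fintype U]
    (hU : ∀ u ∈ U, u⁻¹ ∈ U) : normPhaseInvSum G ψ U = normPhaseSum G ψ U :=
  Equiv.sum_comp (Function.Involutive.toPerm (fun u : U => (⟨u⁻¹, hU u u.2⟩ : U))
    fun u => Subtype.ext (inv_inv (u : F))) fun u => normPhase G ψ (u : F)

theorem sum_normPhase_mul_norm [Fintype G] (ψ : AddChar F K) (c : F) {y : G} (hy : y ≠ 0) :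
    ∑ x, normPhase G ψ (c * Algebra.norm F y) x = ∑ x, normPhase G ψ c x := by
  simpa [normPhase, mul_assoc] using Equiv.sum_comp (Equiv.mulLeft₀ y hy) (normPhase G ψ c)

theorem pow_natCard_pow_finrank [Finite G] (y : G) : y ^ Nat.card F ^ Module.finrank F G = y := by
  have := Fintype.ofFinite G
  rw [← Module.natCard_eq_pow_finrank, Nat.card_eq_fintype_card, FiniteField.pow_card]

theorem pow_natCard_pow_natCard [Finite G] (hFG : Module.finrank F G = 2) (y : G) :
    (y ^ Nat.card F) ^ Nat.card F = y := by
  rw [← pow_mul, ← sq, ← hFG, pow_natCard_pow_finrank]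

theorem norm_add_of_finrank_eq_two [Finite G] (hFG : Module.finrank F G = 2) (x y : G) :
    Algebra.norm F (x + y) = Algebra.norm F x +
      Algebra.trace F G (x * y ^ Nat.card F) + Algebra.norm F y := by
  have : Finite F := Finite.of_injective _ (algebraMap F G).injective
  have := Fintype.ofFinite F
  have hadd : (x + y) ^ Nat.card F = x ^ Nat.card F + y ^ Nat.card F := by
    simpa using map_add (FiniteField.frobeniusAlgHom F G) x y
  apply (algebraMap F G).injective
  simp only [map_add, FiniteField.algebraMap_norm_eq_prod_pow,
    FiniteField.algebraMap_trace_eq_sum_pow, hFG, Finset.prod_range_succ, Finset.sum_range_succ,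
    Finset.prod_range_zero, Finset.sum_range_zero, pow_zero, pow_one, mul_pow, hadd,
    pow_natCard_pow_natCard hFG]
  ring

theorem mul_norm_add_inv_smul [Finite G] (hFG : Module.finrank F G = 2) {c : F} (hc : c ≠ 0)
    (b x : G) :
    c * Algebra.norm F (x + c⁻¹ • b ^ Nat.card F) =
      Algebra.trace F G (b * x) + c * Algebra.norm F x + c⁻¹ * Algebra.norm F b := by
  have : Finite F := Finite.of_injective _ (algebraMap F G).injective
  have := Fintype.ofFinite F
  have hb : (c⁻¹ • b ^ Nat.card F) ^ Nat.card F = c⁻¹ • b := by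
    rw [smul_pow, pow_natCard_pow_natCard hFG, Nat.card_eq_fintype_card, FiniteField.pow_card]
  have hN : Algebra.norm F (c⁻¹ • b ^ Nat.card F) = c⁻¹ ^ 2 * Algebra.norm F b := by
    rw [Algebra.smul_def, map_mul, Algebra.norm_algebraMap, hFG, map_pow, Nat.card_eq_fintype_card,
      FiniteField.pow_card]
  rw [norm_add_of_finrank_eq_two hFG, hb, hN, mul_smul_comm, map_smul, smul_eq_mul, mul_comm x b]
  field_simp
  ring

variable [Fintype F] [Fintype G] {ψ : AddChar F K}

theorem card_sub_one_mul_sum_normPhase (hψ : ψ.IsPrimitive) {c : F} (hc : c ≠ 0) :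
    ((Fintype.card F : K) - 1) * ∑ x, normPhase G ψ c x = Fintype.card F - Fintype.card G := by
  classical
  have hconst : ∀ a ≠ 0, ∑ x, normPhase G ψ a x = ∑ x, normPhase G ψ c x := by
    intro a ha
    obtain ⟨y, hy⟩ := FiniteField.norm_surjective F G (c⁻¹ * a)
    have hy0 : y ≠ 0 := by
      rintro rfl
      simp [hc, ha, eq_comm] at hy
    rw [← sum_normPhase_mul_norm ψ c hy0, hy, mul_inv_cancel_left₀ hc]
  have htotal : ∑ a, ∑ x, normPhase G ψ a x = Fintype.card F := by
    rw [Finset.sum_comm]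
    simp [normPhase, AddChar.sum_mulShift _ hψ, Algebra.norm_eq_zero_iff]
  rw [sum_eq_apply_zero_add_card_sub_one_mul hconst] at htotal
  have hzero : ∑ x, normPhase G ψ 0 x = Fintype.card G := by simp [normPhase]
  linear_combination htotal - hzero

theorem sum_normPhase [CharZero K] (hFG : Module.finrank F G = 2) (hψ : ψ.IsPrimitive) {c : F}
    (hc : c ≠ 0) : ∑ x, normPhase G ψ c x = -(Fintype.card F : K) := by
  have hF : (Fintype.card F : K) - 1 ≠ 0 :=
    sub_ne_zero.mpr (by exact_mod_cast Fintype.one_lt_card.ne')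
  have hG : (Fintype.card G : K) = (Fintype.card F : K) ^ 2 := by
    rw [Module.card_eq_pow_finrank (K := F) (V := G), hFG, Nat.cast_pow]
  apply mul_left_cancel₀ hF
  rw [card_sub_one_mul_sum_normPhase hψ hc, hG]
  ring

variable [CharZero K]

open Classical in
theorem fourierTransform_normPhase (hFG : Module.finrank F G = 2) (hψ : ψ.IsPrimitive) (c : F) :
    fourierTransform (traceChar G ψ) (normPhase G ψ c) =
      -(Fintype.card F : K) • normPhase G ψ (-c⁻¹) +
        if c = 0 then
          (Fintype.card G : K) • ({0} : Set G).indicator 1 + (Fintype.card F : K) • 1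
        else 0 := by
  by_cases hc : c = 0
  · have hone : normPhase G ψ 0 = 1 := by ext; simp [normPhase]
    simp only [hc, inv_zero, neg_zero, hone, fourierTransform_one (traceChar_isPrimitive hψ),
      if_true]
    module
  · ext b
    have hsquare (x : G) : traceChar G ψ (b * x) * normPhase G ψ c x =
        normPhase G ψ (-c⁻¹) b * normPhase G ψ c (x + c⁻¹ • b ^ Nat.card F) := by
      rw [normPhase, normPhase, normPhase, traceChar_apply, ← AddChar.map_add_eq_mul,
        ← AddChar.map_add_eq_mul, mul_norm_add_inv_smul hFG hc]
      ring_nf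
    simp only [fourierTransform_apply, hsquare, ← Finset.mul_sum]
    have htranslate : ∑ x, normPhase G ψ c (x + c⁻¹ • b ^ Nat.card F) = ∑ x, normPhase G ψ c x :=
      Equiv.sum_comp (Equiv.addRight (c⁻¹ • b ^ Nat.card F)) (normPhase G ψ c)
    rw [htranslate, sum_normPhase hFG hψ hc]
    simp [hc, mul_comm]

variable [AddSubgroupClass S F] (U : S) [Fintype U]

theorem fourierTransform_normPhaseSum (hFG : Module.finrank F G = 2) (hψ : ψ.IsPrimitive) :
    fourierTransform (traceChar G ψ) (normPhaseSum G ψ U) =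
      (Fintype.card G : K) • ({0} : Set G).indicator 1 + (Fintype.card F : K) • 1 -
        (Fintype.card F : K) • normPhaseInvSum G ψ U := by
  have hneg : ∑ u : U, normPhase G ψ (-(u : F)⁻¹) = normPhaseInvSum G ψ U := by
    rw [normPhaseInvSum, ← Equiv.sum_comp (Equiv.neg U)]
    simp [inv_neg]
  simp only [normPhaseSum, map_sum, fourierTransform_normPhase hFG hψ, Finset.sum_add_distrib,
    ← Finset.smul_sum, hneg]
  rw [Fintype.sum_eq_single 0 fun u hu => if_neg (by simpa using hu), if_pos (by simp)]
  module

theorem fourierTransform_normPhaseInvSum (hFG : Module.finrank F G = 2) (hψ : ψ.IsPrimitive) :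
    fourierTransform (traceChar G ψ) (normPhaseInvSum G ψ U) =
      (Fintype.card G : K) • ({0} : Set G).indicator 1 + (Fintype.card F : K) • 1 -
        (Fintype.card F : K) • normPhaseSum G ψ U := by
  have hneg : ∑ u : U, normPhase G ψ (-(u : F)) = normPhaseSum G ψ U := by
    rw [normPhaseSum, ← Equiv.sum_comp (Equiv.neg U)]
    simp
  simp only [normPhaseInvSum, map_sum, fourierTransform_normPhase hFG hψ, Finset.sum_add_distrib,
    ← Finset.smul_sum, inv_inv, inv_eq_zero, hneg]
  rw [Fintype.sum_eq_single 0 fun u hu => if_neg (by simpa using hu), if_pos (by simp)]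
  module

end NormPhase

section TraceZeroFactors

variable {E F G K : Type*} [Field E] [Field F] [Field G] [Algebra E F] [Algebra F G] [Field K]

/-- The factors `v` in the factorisations `y = v * (y / v)` of `y` into two nonzero elements of
relative trace zero. -/
def traceZeroFactors (E : Type*) {F : Type*} [Field E] [Field F] [Algebra E F] (y : F) : Set F :=
  {v | v ≠ 0 ∧ Algebra.trace E F v = 0 ∧ Algebra.trace E F (y / v) = 0}

theorem sum_traceChar_smul_inv_mul (ψ : AddChar E K) (U : Submodule E F) [Fintype U] (y : F)
    {e : E} (he : e ≠ 0) :
    ∑ u : U, traceChar F ψ (e • ((u : F)⁻¹ * y)) = ∑ u : U, traceChar F ψ ((u : F)⁻¹ * y) := by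
  rw [← Equiv.sum_comp (MulAction.toPerm (Units.mk0 e he))
    fun u : U => traceChar F ψ (e • ((u : F)⁻¹ * y))]
  refine Finset.sum_congr rfl fun u _ => congrArg (traceChar F ψ) ?_
  simp [Units.smul_def, smul_inv₀, smul_smul, he]

theorem sum_traceChar_inv_mul [Fintype E] {ψ : AddChar E K} (hψ : ψ.IsPrimitive)
    (U : Submodule E F) [Fintype U] (y : F) :
    ((Fintype.card E : K) - 1) * ∑ u : U, traceChar F ψ ((u : F)⁻¹ * y) =
      Fintype.card E * ({u | u ∈ U ∧ Algebra.trace E F (u⁻¹ * y) = 0}.ncard : K) -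
        Fintype.card U := by
  classical
  have hinner (u : U) : ∑ e : E, traceChar F ψ (e • ((u : F)⁻¹ * y)) =
      if Algebra.trace E F ((u : F)⁻¹ * y) = 0 then (Fintype.card E : K) else 0 := by
    simp [traceChar_apply, AddChar.sum_mulShift _ hψ]
  have hcount : {u | u ∈ U ∧ Algebra.trace E F (u⁻¹ * y) = 0}.ncard =
      (Finset.univ.filter fun u : U => Algebra.trace E F ((u : F)⁻¹ * y) = 0).card := by
    rw [← Set.ncard_coe_finset, ← Set.ncard_image_of_injective _ Subtype.val_injective]
    congr 1
    ext
    simp [and_comm]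
  have htotal : ∑ e : E, ∑ u : U, traceChar F ψ (e • ((u : F)⁻¹ * y)) =
      Fintype.card E * ({u | u ∈ U ∧ Algebra.trace E F (u⁻¹ * y) = 0}.ncard : K) := by
    simp only [Finset.sum_comm (γ := E), hinner, hcount, ← Finset.sum_filter, Finset.sum_const,
      nsmul_eq_mul, mul_comm (Fintype.card E : K)]
  rw [sum_eq_apply_zero_add_card_sub_one_mul fun e he => sum_traceChar_smul_inv_mul ψ U y he]
    at htotal
  have hzero : ∑ u : U, traceChar F ψ ((0 : E) • ((u : F)⁻¹ * y)) = Fintype.card U := by simp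
  linear_combination htotal - hzero

theorem insert_zero_traceZeroFactors (y : F) :
    insert 0 (traceZeroFactors E y) =
      {v | v ∈ LinearMap.ker (Algebra.trace E F) ∧ Algebra.trace E F (v⁻¹ * y) = 0} := by
  ext v
  by_cases hv : v = 0 <;> simp [traceZeroFactors, hv, div_eq_inv_mul]

theorem normPhaseInvSum_ker_trace [Fintype E] [Finite F] {ψ : AddChar E K} (hψ : ψ.IsPrimitive)
    [Fintype (LinearMap.ker (Algebra.trace E F))] (x : G) :
    ((Fintype.card E : K) - 1) * normPhaseInvSum G (traceChar F ψ)
        (LinearMap.ker (Algebra.trace E F)) x =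
      Fintype.card E * ((traceZeroFactors E (Algebra.norm F x)).ncard + 1) -
        Fintype.card (LinearMap.ker (Algebra.trace E F)) := by
  have hcount := sum_traceChar_inv_mul hψ (LinearMap.ker (Algebra.trace E F)) (Algebra.norm F x)
  rw [← insert_zero_traceZeroFactors, Set.ncard_insert_of_notMem fun h => h.1 rfl] at hcount
  simpa [normPhaseInvSum, normPhase] using hcount

end TraceZeroFactors

section DualSpaces

variable {E F G K : Type*} [Field E] [Field F] [Field G] [Algebra E F] [Algebra F G] [Field K]

/-- The elements of `G` whose norm lies in the subspace `U` of `F`. -/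
def normPreimage (G : Type*) [Field G] [Algebra F G] (U : Submodule E F) : Set G :=
  {x | Algebra.norm F x ∈ U}

/-- The span of the indicator functions of `{0}`, of `G`, and of the elements of `G` whose norm has
relative trace zero, respectively lies in `E`. -/
def normIndicatorSpan (E F G K : Type*) [Field E] [Field F] [Field G] [Algebra E F] [Algebra F G]
    [Field K] : Submodule K (G → K) :=
  Submodule.span K ((fun S => S.indicator 1) ''
    {{0}, Set.univ, normPreimage G (LinearMap.ker (Algebra.trace E F)),
      normPreimage G (1 : Submodule E F)})

open Classical in
/-- The space dual to `normIndicatorSpan` under the Fourier transform: the indicator function of the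
elements whose norm lies in `E` is replaced by the phase sum `x ↦ ∑ ψ(u⁻¹ N(x))` over the `u` of
relative trace zero. -/
def normPhaseSpan (F G : Type*) [Field F] [Fintype F] [Field G] [Algebra E F]
    [Algebra F G] (ψ : AddChar E K) : Submodule K (G → K) :=
  Submodule.span K
    {({0} : Set G).indicator 1, 1,
      (normPreimage G (LinearMap.ker (Algebra.trace E F))).indicator 1,
      normPhaseInvSum G (traceChar F ψ) (LinearMap.ker (Algebra.trace E F))}

theorem normIndicatorSpan_mul_le [Finite G] (hEF : (Module.finrank E F : E) ≠ 0) :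
    normIndicatorSpan E F G K * normIndicatorSpan E F G K ≤ normIndicatorSpan E F G K := by
  have hdisjoint : normPreimage G (LinearMap.ker (Algebra.trace E F)) ∩
      normPreimage G (1 : Submodule E F) = ({0} : Set G) := by
    ext x
    constructor
    · rintro ⟨hx, hxE⟩
      obtain ⟨e, he⟩ := Submodule.mem_one.mp hxE
      have htrace : Module.finrank E F • e = 0 := by
        rw [← Algebra.trace_algebraMap (S := F), he]
        exact hx
      have he0 : e = 0 := by simpa only [nsmul_eq_mul, mul_eq_zero, hEF, false_or] using htrace
      exact Algebra.norm_eq_zero_iff.mp (he.symm.trans (by rw [he0, map_zero]))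
    · rintro rfl
      simp [normPreimage]
  have hzero (U : Submodule E F) : {0} ∩ normPreimage G U = ({0} : Set G) := by
    simp [normPreimage]
  have hdisjoint' := (Set.inter_comm _ _).trans hdisjoint
  refine span_indicator_mul_le ?_
  rintro _ (rfl | rfl | rfl | rfl) _ (rfl | rfl | rfl | rfl) <;>
    simp [hdisjoint, hdisjoint', hzero, Set.inter_comm _ {(0 : G)}]

variable {ψ : AddChar E K}

theorem normPhaseSum_traceChar (hψ : ψ.IsPrimitive) (U : Submodule E F) [Fintype U] :
    normPhaseSum G (traceChar F ψ) U = (Fintype.card U : K) •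
      (normPreimage G ((Algebra.traceForm E F).orthogonal U)).indicator 1 := by
  ext x
  have horth := sum_traceChar_mul hψ U (Algebra.norm F x)
  classical
  rw [Set.indicator_apply] at horth
  simpa [normPhaseSum, normPhase, Set.indicator_apply, normPreimage] using horth

theorem indicator_zero_mem_normPhaseSpan [Fintype F] :
    ({0} : Set G).indicator 1 ∈ normPhaseSpan F G ψ :=
  Submodule.subset_span (by simp)

theorem one_mem_normPhaseSpan [Fintype F] : 1 ∈ normPhaseSpan F G ψ :=
  Submodule.subset_span (by simp)

theorem indicator_ker_trace_mem_normPhaseSpan [Fintype F] :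
    (normPreimage G (LinearMap.ker (Algebra.trace E F))).indicator 1 ∈ normPhaseSpan F G ψ :=
  Submodule.subset_span (by simp)

open Classical in
theorem normPhaseInvSum_mem_normPhaseSpan [Fintype F] :
    normPhaseInvSum G (traceChar F ψ) (LinearMap.ker (Algebra.trace E F)) ∈ normPhaseSpan F G ψ :=
  Submodule.subset_span (by simp)

theorem natCast_ncard_traceZeroFactors_norm_mem_normPhaseSpan [Fintype F] [CharZero K]
    (hψ : ψ.IsPrimitive) :
    (fun x : G => ((traceZeroFactors E (Algebra.norm F x)).ncard : K)) ∈ normPhaseSpan F G ψ := by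
  classical
  have : Finite E := Finite.of_injective _ (algebraMap E F).injective
  have := Fintype.ofFinite E
  have hq : (Fintype.card E : K) ≠ 0 := Nat.cast_ne_zero.mpr Fintype.card_ne_zero
  have heq : (Fintype.card E : K) • (fun x : G =>
      ((traceZeroFactors E (Algebra.norm F x)).ncard : K)) =
      ((Fintype.card E : K) - 1) •
          normPhaseInvSum G (traceChar F ψ) (LinearMap.ker (Algebra.trace E F)) +
        ((Fintype.card (LinearMap.ker (Algebra.trace E F)) : K) - Fintype.card E) • 1 := by
    ext x
    simp only [Pi.smul_apply, Pi.add_apply, Pi.one_apply, smul_eq_mul,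
      normPhaseInvSum_ker_trace hψ]
    ring
  rw [← Submodule.smul_mem_iff _ hq, heq]
  exact add_mem (Submodule.smul_mem _ _ normPhaseInvSum_mem_normPhaseSpan)
    (Submodule.smul_mem _ _ one_mem_normPhaseSpan)

theorem indicator_mem_normIndicatorSpan {S : Set G}
    (hS : S = {0} ∨ S = Set.univ ∨ S = normPreimage G (LinearMap.ker (Algebra.trace E F)) ∨
      S = normPreimage G (1 : Submodule E F)) :
    S.indicator 1 ∈ normIndicatorSpan E F G K :=
  Submodule.subset_span ⟨S, hS, rfl⟩

variable [Fintype F] [Fintype G] [CharZero K]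

theorem card_smul_fourierTransform_indicator (hFG : Module.finrank F G = 2) (hψ : ψ.IsPrimitive)
    (U : Submodule E F) [Fintype U] :
    (Fintype.card U : K) • fourierTransform (traceChar G (traceChar F ψ))
        ((normPreimage G ((Algebra.traceForm E F).orthogonal U)).indicator 1) =
      (Fintype.card G : K) • ({0} : Set G).indicator 1 + (Fintype.card F : K) • 1 -
        (Fintype.card F : K) • normPhaseInvSum G (traceChar F ψ) U := by
  rw [← map_smul, ← normPhaseSum_traceChar hψ,
    fourierTransform_normPhaseSum _ hFG (traceChar_isPrimitive hψ)]

theorem card_smul_fourierTransform_indicator_ker_trace (hFG : Module.finrank F G = 2)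
    (hψ : ψ.IsPrimitive) [Fintype (1 : Submodule E F)] :
    (Fintype.card (1 : Submodule E F) : K) • fourierTransform (traceChar G (traceChar F ψ))
        ((normPreimage G (LinearMap.ker (Algebra.trace E F))).indicator 1) =
      (Fintype.card G : K) • ({0} : Set G).indicator 1 + (Fintype.card F : K) • 1 -
        ((Fintype.card F : K) * Fintype.card (1 : Submodule E F)) •
          (normPreimage G (LinearMap.ker (Algebra.trace E F))).indicator 1 := by
  have hinv : ∀ u ∈ (1 : Submodule E F), u⁻¹ ∈ (1 : Submodule E F) := by
    intro u hu
    obtain ⟨e, rfl⟩ := Submodule.mem_one.mp hu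
    exact Submodule.mem_one.mpr ⟨e⁻¹, map_inv₀ _ _⟩
  rw [← traceForm_orthogonal_one, card_smul_fourierTransform_indicator hFG hψ,
    normPhaseInvSum_eq_normPhaseSum _ hinv, normPhaseSum_traceChar hψ, smul_smul]

theorem normPhaseSpan_le_comap_fourierTransform (hFG : Module.finrank F G = 2)
    (hψ : ψ.IsPrimitive) :
    normPhaseSpan F G ψ ≤
      (normIndicatorSpan E F G K).comap (fourierTransform (traceChar G (traceChar F ψ))) := by
  classical
  have hδ : ({0} : Set G).indicator 1 ∈ normIndicatorSpan E F G K :=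
    indicator_mem_normIndicatorSpan (by simp)
  have hone : 1 ∈ normIndicatorSpan E F G K := by
    simpa using indicator_mem_normIndicatorSpan (E := E) (F := F) (G := G) (K := K)
      (S := Set.univ) (by simp)
  refine Submodule.span_le.mpr ?_
  rintro _ (rfl | rfl | rfl | rfl) <;>
    simp only [Submodule.comap_coe, Set.mem_preimage, SetLike.mem_coe]
  · rwa [fourierTransform_indicator_zero]
  · rw [fourierTransform_one (traceChar_isPrimitive (traceChar_isPrimitive hψ))]
    exact Submodule.smul_mem _ _ hδ
  · have hcard : (Fintype.card (1 : Submodule E F) : K) ≠ 0 :=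
      Nat.cast_ne_zero.mpr Fintype.card_ne_zero
    rw [← Submodule.smul_mem_iff _ hcard, card_smul_fourierTransform_indicator_ker_trace hFG hψ]
    exact sub_mem (add_mem (Submodule.smul_mem _ _ hδ) (Submodule.smul_mem _ _ hone))
      (Submodule.smul_mem _ _ (indicator_mem_normIndicatorSpan (by simp)))
  · rw [fourierTransform_normPhaseInvSum _ hFG (traceChar_isPrimitive hψ),
      normPhaseSum_traceChar hψ, traceForm_orthogonal_ker_trace]
    exact sub_mem (add_mem (Submodule.smul_mem _ _ hδ) (Submodule.smul_mem _ _ hone))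
      (Submodule.smul_mem _ _ (Submodule.smul_mem _ _ (indicator_mem_normIndicatorSpan (by simp))))

theorem normIndicatorSpan_le_comap_fourierTransform (hFG : Module.finrank F G = 2)
    (hψ : ψ.IsPrimitive) :
    normIndicatorSpan E F G K ≤
      (normPhaseSpan F G ψ).comap (fourierTransform (traceChar G (traceChar F ψ))) := by
  classical
  have hδ : ({0} : Set G).indicator 1 ∈ normPhaseSpan F G ψ :=
    indicator_zero_mem_normPhaseSpan
  have hone : 1 ∈ normPhaseSpan F G ψ := one_mem_normPhaseSpan
  refine Submodule.span_le.mpr ?_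
  rintro _ ⟨_, rfl | rfl | rfl | rfl, rfl⟩ <;>
    simp only [Submodule.comap_coe, Set.mem_preimage, SetLike.mem_coe]
  · rwa [fourierTransform_indicator_zero]
  · rw [Set.indicator_univ, fourierTransform_one (traceChar_isPrimitive (traceChar_isPrimitive hψ))]
    exact Submodule.smul_mem _ _ hδ
  · have hcard : (Fintype.card (1 : Submodule E F) : K) ≠ 0 :=
      Nat.cast_ne_zero.mpr Fintype.card_ne_zero
    rw [← Submodule.smul_mem_iff _ hcard, card_smul_fourierTransform_indicator_ker_trace hFG hψ]
    exact sub_mem (add_mem (Submodule.smul_mem _ _ hδ) (Submodule.smul_mem _ _ hone))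
      (Submodule.smul_mem _ _ indicator_ker_trace_mem_normPhaseSpan)
  · have hcard : (Fintype.card (LinearMap.ker (Algebra.trace E F)) : K) ≠ 0 :=
      Nat.cast_ne_zero.mpr Fintype.card_ne_zero
    rw [← Submodule.smul_mem_iff _ hcard, ← traceForm_orthogonal_ker_trace,
      card_smul_fourierTransform_indicator hFG hψ]
    exact sub_mem (add_mem (Submodule.smul_mem _ _ hδ) (Submodule.smul_mem _ _ hone))
      (Submodule.smul_mem _ _ normPhaseInvSum_mem_normPhaseSpan)

theorem crossCorrelation_mem_normPhaseSpan (hEF : (Module.finrank E F : E) ≠ 0)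
    (hFG : Module.finrank F G = 2) (hψ : ψ.IsPrimitive) {f g : G → K}
    (hf : f ∈ normPhaseSpan F G ψ) (hg : g ∈ normPhaseSpan F G ψ) :
    crossCorrelation f g ∈ normPhaseSpan F G ψ :=
  crossCorrelation_mem_of_fourierTransform_mem
    (traceChar_isPrimitive (traceChar_isPrimitive hψ))
    (normPhaseSpan_le_comap_fourierTransform hFG hψ)
    (normIndicatorSpan_le_comap_fourierTransform hFG hψ) (normIndicatorSpan_mul_le hEF) hf hg

end DualSpaces

section CubicExtension

variable {E F : Type*} [Field E] [Field F] [Algebra E F]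

theorem eq_zero_of_aeval_eq_zero_of_natDegree_lt_finrank (hprime : (Module.finrank E F).Prime)
    {t : F} (ht : t ∉ (algebraMap E F).range) {P : Polynomial E} (hP : Polynomial.aeval t P = 0)
    (hdeg : P.natDegree < Module.finrank E F) : P = 0 := by
  have : Module.Finite E F := Module.finite_of_finrank_pos hprime.pos
  have hint : IsIntegral E t := Algebra.IsIntegral.isIntegral t
  by_contra hP0
  have hle : (minpoly E t).natDegree ≤ P.natDegree :=
    Polynomial.natDegree_le_natDegree (minpoly.degree_le_of_ne_zero E t hP0 hP)
  obtain hone | hfull := hprime.eq_one_or_self_of_dvd _ (minpoly.degree_dvd hint)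
  · exact ht (minpoly.natDegree_eq_one_iff.mp hone)
  · omega

theorem ncard_orbit_units {p : F} (hp : p ≠ 0) :
    (MulAction.orbit Eˣ p).ncard = Nat.card E - 1 := by
  have hinj : Function.Injective fun c : Eˣ => c • p := fun c d h =>
    Units.ext (smul_left_injective E hp h)
  rw [MulAction.orbit, ← Set.image_univ, Set.ncard_image_of_injective _ hinj, Set.ncard_univ,
    Nat.card_units]

theorem mem_orbit_or_mem_orbit_of_mul_eq_mul (hEF : Module.finrank E F = 3) {U : Submodule E F}
    (hU : Module.finrank E U = 2) {p r v w : F} (hp : p ∈ U) (hr : r ∈ U) (hv : v ∈ U) (hw : w ∈ U)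
    (hp0 : p ≠ 0) (hr0 : r ≠ 0) (h : p * r = v * w) :
    v ∈ MulAction.orbit Eˣ p ∨ v ∈ MulAction.orbit Eˣ r := by
  refine or_iff_not_imp_left.mpr fun hvp => ?_
  have hv0 : v ≠ 0 := by rintro rfl; simp [hp0, hr0] at h
  have hmul (a : E) : a • p ≠ v := fun hav =>
    hvp ⟨Units.mk0 a (by rintro rfl; exact hv0 (by simpa using hav.symm)), hav⟩
  have hspan : Submodule.span E {p, v} = U := by
    have : Module.Finite E F := Module.finite_of_finrank_eq_succ hEF
    refine Submodule.eq_of_le_of_finrank_le (Submodule.span_le.mpr (Set.pair_subset hp hv)) ?_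
    have hrank := finrank_span_eq_card ((LinearIndependent.pair_iff' hp0).mpr hmul)
    rw [Matrix.range_cons_cons_empty, Fintype.card_fin] at hrank
    rw [hU, hrank]
  obtain ⟨a, b, rfl⟩ := Submodule.mem_span_pair.mp (hspan ▸ hr)
  obtain ⟨c, d, rfl⟩ := Submodule.mem_span_pair.mp (hspan ▸ hw)
  have ht : v / p ∉ (algebraMap E F).range := by
    rintro ⟨e, he⟩
    exact hmul e (by rw [Algebra.smul_def, he, div_mul_cancel₀ _ hp0])
  have hquad : Polynomial.aeval (v / p) (Polynomial.C (-d) * Polynomial.X ^ 2 +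
      Polynomial.C (b - c) * Polynomial.X + Polynomial.C a) = 0 := by
    simp only [Algebra.smul_def] at h
    simp only [map_add, map_mul, map_pow, Polynomial.aeval_C, Polynomial.aeval_X, map_sub, map_neg]
    field_simp
    linear_combination h
  have hzero := eq_zero_of_aeval_eq_zero_of_natDegree_lt_finrank (hEF ▸ Nat.prime_three) ht hquad
    (Polynomial.natDegree_quadratic_le.trans_lt (by omega))
  have ha : a = 0 := by simpa using congrArg (Polynomial.coeff · 0) hzero
  have hb : b ≠ 0 := by rintro rfl; simp [ha] at hr0
  exact ⟨(Units.mk0 b hb)⁻¹, by simp [ha, Units.smul_def, smul_smul, hb]⟩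

theorem finrank_ker_trace [Finite F] :
    Module.finrank E (LinearMap.ker (Algebra.trace E F)) + 1 = Module.finrank E F :=
  Module.Dual.finrank_ker_add_one_of_ne_zero (Algebra.trace_ne_zero E F)

theorem trace_pow_char [Finite F] (p : ℕ) [Fact p.Prime] [CharP F p] (x : F) :
    Algebra.trace E F (x ^ p) = Algebra.trace E F x ^ p := by
  apply (algebraMap E F).injective
  simp only [map_pow, FiniteField.algebraMap_trace_eq_sum_pow, sum_pow_char, ← pow_mul, mul_comm p]

variable {y v : F}

theorem smul_mem_traceZeroFactors (hv : v ∈ traceZeroFactors E y) (c : Eˣ) :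
    c • v ∈ traceZeroFactors E y := by
  obtain ⟨hv0, htv, htyv⟩ := hv
  have hdiv : y / (c • v) = c⁻¹ • (y / v) := by
    simp only [Units.smul_def, div_eq_mul_inv, smul_inv₀, mul_smul_comm, Units.val_inv_eq_inv_val]
  refine ⟨smul_ne_zero c.ne_zero hv0, ?_, ?_⟩
  · simp [Units.smul_def, htv]
  · rw [hdiv, Units.smul_def, map_smul, htyv, smul_zero]

theorem traceZeroFactors_smul {c : E} (hc : c ≠ 0) (y : F) :
    traceZeroFactors E (c • y) = traceZeroFactors E y := by
  ext v
  simp [traceZeroFactors, smul_div_assoc, hc]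

theorem div_mem_traceZeroFactors (hy : y ≠ 0) (hv : v ∈ traceZeroFactors E y) :
    y / v ∈ traceZeroFactors E y :=
  ⟨div_ne_zero hy hv.1, hv.2.2, by rw [div_div_cancel₀ hy]; exact hv.2.1⟩

variable [Finite F]

theorem traceZeroFactors_eq_orbit_union_orbit (hEF : Module.finrank E F = 3) (hy : y ≠ 0)
    (hv : v ∈ traceZeroFactors E y) :
    traceZeroFactors E y = MulAction.orbit Eˣ v ∪ MulAction.orbit Eˣ (y / v) := by
  ext w
  constructor
  · intro hw
    have hker : Module.finrank E (LinearMap.ker (Algebra.trace E F)) = 2 := by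
      have := finrank_ker_trace (E := E) (F := F)
      omega
    refine mem_orbit_or_mem_orbit_of_mul_eq_mul hEF hker hv.2.1 hv.2.2 hw.2.1 hw.2.2 hv.1
      (div_ne_zero hy hv.1) ?_
    rw [mul_div_cancel₀ _ hv.1, mul_div_cancel₀ _ hw.1]
  · rintro (⟨c, rfl⟩ | ⟨c, rfl⟩)
    · exact smul_mem_traceZeroFactors hv c
    · exact smul_mem_traceZeroFactors (div_mem_traceZeroFactors hy hv) c

variable [CharP F 2]

theorem ncard_traceZeroFactors_of_trace_eq_zero (hEF : Module.finrank E F = 3) (hy : y ≠ 0)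
    (htrace : Algebra.trace E F y = 0) : (traceZeroFactors E y).ncard = Nat.card E - 1 := by
  obtain ⟨w, rfl⟩ := surjective_frobenius F 2 y
  rw [frobenius_def] at *
  have hw0 : w ≠ 0 := by rintro rfl; simp at hy
  have hdiv : w ^ 2 / w = w := by rw [sq, mul_div_cancel_right₀ _ hw0]
  have htw : Algebra.trace E F w = 0 := by simpa [trace_pow_char] using htrace
  have hw : w ∈ traceZeroFactors E (w ^ 2) := ⟨hw0, htw, by rw [hdiv, htw]⟩
  rw [traceZeroFactors_eq_orbit_union_orbit hEF hy hw, hdiv, Set.union_self, ncard_orbit_units hw0]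

theorem ncard_traceZeroFactors_of_trace_ne_zero (hEF : Module.finrank E F = 3)
    (htrace : Algebra.trace E F y ≠ 0) :
    (traceZeroFactors E y).ncard = 0 ∨ (traceZeroFactors E y).ncard = 2 * (Nat.card E - 1) := by
  have hy : y ≠ 0 := by rintro rfl; simp at htrace
  obtain hempty | ⟨v, hv⟩ := (traceZeroFactors E y).eq_empty_or_nonempty
  · exact Or.inl (by rw [hempty, Set.ncard_empty])
  right
  have hdisjoint : Disjoint (MulAction.orbit Eˣ v) (MulAction.orbit Eˣ (y / v)) := by
    refine (MulAction.orbit.eq_or_disjoint v (y / v)).resolve_left fun horbit => htrace ?_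
    obtain ⟨c, hc : c • v = y / v⟩ := horbit ▸ MulAction.mem_orbit_self (M := Eˣ) (y / v)
    have hyv : y = (c : E) • v ^ 2 := by
      rw [← div_mul_cancel₀ y hv.1, ← hc, Units.smul_def, smul_mul_assoc, sq]
    rw [hyv, map_smul, trace_pow_char, hv.2.1, zero_pow two_ne_zero, smul_zero]
  rw [traceZeroFactors_eq_orbit_union_orbit hEF hy hv, Set.ncard_union_eq hdisjoint,
    ncard_orbit_units hv.1, ncard_orbit_units (div_ne_zero hy hv.1), two_mul]

end CubicExtension

section NormFactorClass

variable {E F G : Type*} [Field E] [Field F] [Field G] [Algebra E F] [Algebra F G] {K : Type*}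

/-- The partition of `G` into `{0}` and the three sets of nonzero `x` for which the norm of `x` has
`q - 1`, `2 * (q - 1)` and `0` factors of relative trace zero, where `q` is the order of `E`. -/
def normFactorClass (E F G : Type*) [Field E] [Field F] [Field G] [Algebra E F] [Algebra F G] :
    Fin 4 → Set G :=
  ![{0}, {x | x ≠ 0 ∧ (traceZeroFactors E (Algebra.norm F x)).ncard = Nat.card E - 1},
    {x | x ≠ 0 ∧ (traceZeroFactors E (Algebra.norm F x)).ncard = 2 * (Nat.card E - 1)},
    {x | x ≠ 0 ∧ (traceZeroFactors E (Algebra.norm F x)).ncard = 0}]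

theorem eq_zero_iff_of_mem_normFactorClass {m : Fin 4} {d d' : G}
    (hd : d ∈ normFactorClass E F G m) (hd' : d' ∈ normFactorClass E F G m) : d = 0 ↔ d' = 0 := by
  fin_cases m <;> simp_all [normFactorClass]

theorem ncard_traceZeroFactors_norm_eq_of_mem_normFactorClass {m : Fin 4} {d d' : G}
    (hd : d ∈ normFactorClass E F G m) (hd' : d' ∈ normFactorClass E F G m) :
    (traceZeroFactors E (Algebra.norm F d)).ncard =
      (traceZeroFactors E (Algebra.norm F d')).ncard := by
  fin_cases m <;> simp_all [normFactorClass]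

section FiniteField

variable [Finite F] [Finite G] [CharP F 2]

theorem existsUnique_mem_normFactorClass (hEF : Module.finrank E F = 3) (x : G) :
    ∃! k, x ∈ normFactorClass E F G k := by
  have : Finite E := Finite.of_injective _ (algebraMap E F).injective
  have hq : 1 < Nat.card E := Finite.one_lt_card
  obtain rfl | hx := eq_or_ne x 0
  · exact ⟨0, rfl, fun
      | 0, _ => rfl
      | 1, hk | 2, hk | 3, hk => absurd rfl hk.1⟩
  have hNx : Algebra.norm F x ≠ 0 := Algebra.norm_ne_zero_iff.mpr hx
  have hncard : (traceZeroFactors E (Algebra.norm F x)).ncard = Nat.card E - 1 ∨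
      (traceZeroFactors E (Algebra.norm F x)).ncard = 2 * (Nat.card E - 1) ∨
      (traceZeroFactors E (Algebra.norm F x)).ncard = 0 := by
    by_cases htrace : Algebra.trace E F (Algebra.norm F x) = 0
    · exact Or.inl (ncard_traceZeroFactors_of_trace_eq_zero hEF hNx htrace)
    · exact Or.inr (ncard_traceZeroFactors_of_trace_ne_zero hEF htrace).symm
  obtain h | h | h := hncard
  · exact ⟨1, ⟨hx, h⟩, fun k hk => by
      fin_cases k <;> simp [normFactorClass, hx, h] at hk ⊢ <;> omega⟩
  · exact ⟨2, ⟨hx, h⟩, fun k hk => by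
      fin_cases k <;> simp [normFactorClass, hx, h] at hk ⊢ <;> omega⟩
  · exact ⟨3, ⟨hx, h⟩, fun k hk => by
      fin_cases k <;> simp [normFactorClass, hx, h] at hk ⊢ <;> omega⟩

theorem mem_normPreimage_ker_trace_iff (hEF : Module.finrank E F = 3) {x : G} :
    x ∈ normPreimage G (LinearMap.ker (Algebra.trace E F)) ↔
      x = 0 ∨ (traceZeroFactors E (Algebra.norm F x)).ncard = Nat.card E - 1 := by
  have : Finite E := Finite.of_injective _ (algebraMap E F).injective
  have hq : 1 < Nat.card E := Finite.one_lt_card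
  by_cases hx : x = 0
  · simp [hx, normPreimage]
  have hNx : Algebra.norm F x ≠ 0 := Algebra.norm_ne_zero_iff.mpr hx
  by_cases htrace : Algebra.trace E F (Algebra.norm F x) = 0
  · simp [normPreimage, htrace, ncard_traceZeroFactors_of_trace_eq_zero hEF hNx htrace]
  · have hne : (traceZeroFactors E (Algebra.norm F x)).ncard ≠ Nat.card E - 1 := by
      obtain h | h := ncard_traceZeroFactors_of_trace_ne_zero hEF htrace <;> omega
    simp [normPreimage, hx, htrace, hne]

theorem indicator_normFactorClass_one [Ring K] (hEF : Module.finrank E F = 3) :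
    (normFactorClass E F G 1).indicator (1 : G → K) =
      (normPreimage G (LinearMap.ker (Algebra.trace E F))).indicator 1 -
        ({0} : Set G).indicator 1 := by
  have hclass : normFactorClass E F G 1 =
      normPreimage G (LinearMap.ker (Algebra.trace E F)) \ {0} := by
    ext x
    rw [Set.mem_sdiff, mem_normPreimage_ker_trace_iff hEF, Set.mem_singleton_iff, or_and_right]
    simp [normFactorClass, and_comm]
  have hzero : {0} ⊆ normPreimage G (LinearMap.ker (Algebra.trace E F)) := by simp [normPreimage]
  rw [hclass, Set.indicator_sdiff' hzero, sub_eq_add_neg]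

theorem indicator_normFactorClass_apply [MulZeroOneClass K] (hEF : Module.finrank E F = 3)
    {m : Fin 4} {x : G} (hx : x ∈ normFactorClass E F G m) (k : Fin 4) :
    (normFactorClass E F G k).indicator (1 : G → K) x = if k = m then 1 else 0 := by
  classical
  have hmem : x ∈ normFactorClass E F G k ↔ k = m :=
    ⟨fun hk => (existsUnique_mem_normFactorClass hEF x).unique hk hx, fun hk => hk ▸ hx⟩
  simp [Set.indicator_apply, hmem]

theorem sum_indicator_normFactorClass [NonAssocSemiring K] (hEF : Module.finrank E F = 3) :
    ∑ k, (normFactorClass E F G k).indicator (1 : G → K) = 1 := by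
  ext x
  obtain ⟨m, hm, -⟩ := existsUnique_mem_normFactorClass hEF x
  simp [indicator_normFactorClass_apply hEF hm]

theorem natCast_ncard_traceZeroFactors_norm_eq_sum [Semiring K] (hEF : Module.finrank E F = 3) :
    (fun x : G => ((traceZeroFactors E (Algebra.norm F x)).ncard : K)) =
      ∑ k, ((![(traceZeroFactors E (0 : F)).ncard, Nat.card E - 1, 2 * (Nat.card E - 1), 0] k : ℕ)
        : K) • (normFactorClass E F G k).indicator 1 := by
  ext x
  obtain ⟨m, hm, -⟩ := existsUnique_mem_normFactorClass hEF x
  simp only [Finset.sum_apply, Pi.smul_apply, indicator_normFactorClass_apply hEF hm, smul_eq_mul,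
    mul_ite, mul_one, mul_zero, Finset.sum_ite_eq', Finset.mem_univ, if_true]
  fin_cases m <;> simp_all [normFactorClass]

end FiniteField

section NormPhaseSpan

variable [Fintype F] [Finite G] [CharP F 2] [Field K] [CharZero K] {ψ : AddChar E K}

theorem indicator_normFactorClass_mem_normPhaseSpan (hEF : Module.finrank E F = 3)
    (hψ : ψ.IsPrimitive) (k : Fin 4) :
    (normFactorClass E F G k).indicator 1 ∈ normPhaseSpan F G ψ := by
  have : Finite E := Finite.of_injective _ (algebraMap E F).injective
  have hq : ((2 * (Nat.card E - 1) : ℕ) : K) ≠ 0 :=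
    Nat.cast_ne_zero.mpr (mul_ne_zero two_ne_zero (Nat.sub_pos_of_lt Finite.one_lt_card).ne')
  have h0 : (normFactorClass E F G 0).indicator 1 ∈ normPhaseSpan F G ψ :=
    indicator_zero_mem_normPhaseSpan
  have h1 : (normFactorClass E F G 1).indicator 1 ∈ normPhaseSpan F G ψ := by
    rw [indicator_normFactorClass_one hEF]
    exact sub_mem indicator_ker_trace_mem_normPhaseSpan indicator_zero_mem_normPhaseSpan
  have h2 : (normFactorClass E F G 2).indicator 1 ∈ normPhaseSpan F G ψ := by
    have hcount := natCast_ncard_traceZeroFactors_norm_mem_normPhaseSpan (F := F) (G := G) hψ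
    rw [natCast_ncard_traceZeroFactors_norm_eq_sum hEF, Fin.sum_univ_four] at hcount
    simp only [Matrix.cons_val, Nat.cast_zero, zero_smul, add_zero] at hcount
    rwa [Submodule.add_mem_iff_right _ (add_mem (Submodule.smul_mem _ _ h0)
      (Submodule.smul_mem _ _ h1)), Submodule.smul_mem_iff _ hq] at hcount
  have h3 : (normFactorClass E F G 3).indicator 1 ∈ normPhaseSpan F G ψ := by
    have hone : 1 ∈ normPhaseSpan F G ψ := one_mem_normPhaseSpan
    rwa [← sum_indicator_normFactorClass (E := E) (F := F) hEF, Fin.sum_univ_four,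
      Submodule.add_mem_iff_right _ (add_mem (add_mem h0 h1) h2)] at hone
  fin_cases k <;> assumption

theorem apply_eq_apply_of_mem_normPhaseSpan (hEF : Module.finrank E F = 3) (hψ : ψ.IsPrimitive)
    {h : G → K} (hh : h ∈ normPhaseSpan F G ψ) {m : Fin 4} {d d' : G}
    (hd : d ∈ normFactorClass E F G m) (hd' : d' ∈ normFactorClass E F G m) : h d = h d' := by
  classical
  have : Finite E := Finite.of_injective _ (algebraMap E F).injective
  have := Fintype.ofFinite E
  have hq : (Fintype.card E : K) - 1 ≠ 0 :=
    sub_ne_zero.mpr (by exact_mod_cast Fintype.one_lt_card.ne')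
  have hzero := eq_zero_iff_of_mem_normFactorClass hd hd'
  have hncard := ncard_traceZeroFactors_norm_eq_of_mem_normFactorClass hd hd'
  refine LinearMap.eqOn_span (f := LinearMap.proj (R := K) (φ := fun _ : G => K) d)
    (g := LinearMap.proj d') ?_ hh
  rintro _ (rfl | rfl | rfl | rfl)
  · simp [Pi.single_apply, hzero]
  · rfl
  · simp [Set.indicator_apply, mem_normPreimage_ker_trace_iff hEF, hzero, hncard]
  · apply mul_left_cancel₀ hq
    simp only [LinearMap.proj_apply, normPhaseInvSum_ker_trace hψ, hncard]

end NormPhaseSpan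

theorem exists_intersectionNumbers_normFactorClass [Finite F] [Finite G] [CharP F 2]
    (hEF : Module.finrank E F = 3) (hFG : Module.finrank F G = 2) :
    ∃ p : Fin 4 → Fin 4 → Fin 4 → ℕ, ∀ k l m, ∀ d ∈ normFactorClass E F G m,
      {z | z ∈ normFactorClass E F G k ∧ d + z ∈ normFactorClass E F G l}.ncard = p k l m := by
  have : Finite E := Finite.of_injective _ (algebraMap E F).injective
  have := Fintype.ofFinite F
  have := Fintype.ofFinite G
  have : CharP E 2 := (RingHom.charP_iff _ (algebraMap E F).injective 2).mpr ‹_›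
  have hEF0 : (Module.finrank E F : E) ≠ 0 := by
    rw [hEF, Ne, CharP.cast_eq_zero_iff E 2]
    decide
  have hψ := AddChar.FiniteField.primitiveChar_to_Complex_isPrimitive E
  exact exists_intersectionNumbers
    (fun f hf g hg => crossCorrelation_mem_normPhaseSpan hEF0 hFG hψ hf hg)
    (indicator_normFactorClass_mem_normPhaseSpan hEF hψ)
    (fun h hh m d hd d' hd' => apply_eq_apply_of_mem_normPhaseSpan hEF hψ hh hd hd')

end NormFactorClass

section TraceFormula

variable {E F : Type*} [Field E] [Field F] [Algebra E F] [Finite F] {s : ℕ}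

theorem algebraMap_trace_eq_trFE (hE : Nat.card E = 2 ^ s) (hEF : Module.finrank E F = 3)
    (x : F) : algebraMap E F (Algebra.trace E F x) = trFE s x := by
  simp [FiniteField.algebraMap_trace_eq_sum_pow, hEF, hE, Finset.sum_range_succ, trFE, ← pow_mul,
    mul_comm s]

theorem trFE_eq_zero_iff (hE : Nat.card E = 2 ^ s) (hEF : Module.finrank E F = 3)
    {x : F} : trFE s x = 0 ↔ Algebra.trace E F x = 0 := by
  rw [← algebraMap_trace_eq_trFE hE hEF, map_eq_zero]

theorem trace_pow_natCard_add_one (hEF : Module.finrank E F = 3) (x : F) :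
    Algebra.trace E F (x ^ (Nat.card E + 1)) = Algebra.norm E x * Algebra.trace E F x⁻¹ := by
  have hx : ((x ^ Nat.card E) ^ Nat.card E) ^ Nat.card E = x := by
    rw [← pow_mul, ← pow_mul, ← pow_three, ← hEF, pow_natCard_pow_finrank]
  obtain rfl | hx0 := eq_or_ne x 0
  · simp
  apply (algebraMap E F).injective
  simp only [map_mul, FiniteField.algebraMap_trace_eq_sum_pow,
    FiniteField.algebraMap_norm_eq_prod_pow, hEF, Finset.sum_range_succ, Finset.prod_range_succ,
    Finset.sum_range_zero, Finset.prod_range_zero, pow_zero, pow_one, sq, pow_mul, pow_succ x,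
    mul_pow, inv_pow, hx]
  field_simp
  ring

theorem Sa_eq_inv_traceZeroFactors (hE : Nat.card E = 2 ^ s)
    (hEF : Module.finrank E F = 3) (ω : F) (a : ℤ) :
    Sa s ω a = Inv.inv ⁻¹' traceZeroFactors E (ω ^ a) := by
  ext u
  simp only [Sa, traceZeroFactors, Set.mem_ofPred_eq, Set.mem_preimage, trFE_eq_zero_iff hE hEF,
    div_inv_eq_mul, ne_eq, inv_eq_zero, ← hE, trace_pow_natCard_add_one hEF, mul_eq_zero]
  refine and_congr_right fun hu => ?_
  simp [Algebra.norm_eq_zero_iff, hu]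

theorem ncard_Sa (hE : Nat.card E = 2 ^ s) (hEF : Module.finrank E F = 3) (ω : F)
    (a : ℤ) : (Sa s ω a).ncard = (traceZeroFactors E (ω ^ a)).ncard := by
  rw [Sa_eq_inv_traceZeroFactors hE hEF]
  exact Set.ncard_preimage_of_injective_subset_range inv_injective (by simp)

end TraceFormula

section CyclotomicClass

theorem exists_mem_cyc_val {K : Type*} [Field K] {M : ℕ} {g : K} (n : ℕ) :
    ∃ i : ZMod M, g ^ n ∈ cyc M g i.val := by
  refine ⟨n, (n / M : ℕ), ?_⟩
  rw [ZMod.val_natCast, ← Nat.cast_mul, ← Nat.cast_add, Nat.mod_add_div, zpow_natCast]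

variable {E F G : Type*} [Field E] [Field F] [Field G] [Algebra E F] [Algebra F G] [Finite F]
  [Module.Finite F G] {s : ℕ}

theorem pow_Mof (hE : Nat.card E = 2 ^ s) (hEF : Module.finrank E F = 3) (ω : F) :
    ω ^ Mof s = algebraMap E F (Algebra.norm E ω) := by
  rw [FiniteField.algebraMap_norm_eq_pow_sum, hEF, hE]
  congr 1
  simp only [Finset.sum_range_succ, Finset.sum_range_zero]
  ring

theorem ncard_traceZeroFactors_norm_of_mem_cyc (hE : Nat.card E = 2 ^ s)
    (hEF : Module.finrank E F = 3) {γ x : G} (hγ : γ ≠ 0) {i : ℤ} (hx : x ∈ cyc (Mof s) γ i) :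
    (traceZeroFactors E (Algebra.norm F x)).ncard = (Sa s (Algebra.norm F γ) i).ncard := by
  obtain ⟨t, rfl⟩ := hx
  have hnormγ : Algebra.norm F γ ≠ 0 := Algebra.norm_ne_zero_iff.mpr hγ
  have hnormE : Algebra.norm E (Algebra.norm F γ) ≠ 0 := Algebra.norm_ne_zero_iff.mpr hnormγ
  have hnorm : Algebra.norm F (γ ^ (i + Mof s * t)) =
      Algebra.norm E (Algebra.norm F γ) ^ t • Algebra.norm F γ ^ i := by
    rw [Algebra.norm_zpow, zpow_add₀ hnormγ, zpow_mul, zpow_natCast, pow_Mof hE hEF,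
      Algebra.smul_def, map_zpow₀, mul_comm]
  rw [hnorm, traceZeroFactors_smul (zpow_ne_zero _ hnormE), ncard_Sa hE hEF]

theorem mem_Rclass_iff (hE : Nat.card E = 2 ^ s) (hEF : Module.finrank E F = 3)
    {γ : G} (hγ0 : γ ≠ 0) (hγ : ∀ x : G, x ≠ 0 → ∃ n : ℕ, x = γ ^ n) (n : ℕ) (x : G) :
    x ∈ Rclass s γ {i | (Sa s (Algebra.norm F γ) i.val).ncard = n} ↔
      x ≠ 0 ∧ (traceZeroFactors E (Algebra.norm F x)).ncard = n := by
  simp only [Rclass, Set.mem_iUnion₂]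
  constructor
  · rintro ⟨i, hi, hx⟩
    refine ⟨?_, (ncard_traceZeroFactors_norm_of_mem_cyc hE hEF hγ0 hx).trans hi⟩
    obtain ⟨t, rfl⟩ := hx
    exact zpow_ne_zero _ hγ0
  · rintro ⟨hx0, hn⟩
    obtain ⟨k, rfl⟩ := hγ x hx0
    obtain ⟨i, hi⟩ := exists_mem_cyc_val (M := Mof s) (g := γ) k
    exact ⟨i, (ncard_traceZeroFactors_norm_of_mem_cyc hE hEF hγ0 hi).symm.trans hn, hi⟩

theorem Rfam_eq_normFactorClass (hE : Nat.card E = 2 ^ s) (hEF : Module.finrank E F = 3)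
    {γ : G} (hγ0 : γ ≠ 0) (hγ : ∀ x : G, x ≠ 0 → ∃ n : ℕ, x = γ ^ n) :
    Rfam s (Algebra.norm F γ) γ = normFactorClass E F G := by
  have hclass (n : ℕ) : Rclass s γ {i | (Sa s (Algebra.norm F γ) i.val).ncard = n} =
      {x | x ≠ 0 ∧ (traceZeroFactors E (Algebra.norm F x)).ncard = n} :=
    Set.ext (mem_Rclass_iff hE hEF hγ0 hγ n)
  simp only [Rfam, normFactorClass, T1, T2, T3, hclass, hE]

end CyclotomicClass

theorem ne_zero_of_forall_exists_eq_pow {G : Type*} [Field G] (hG : 2 < Nat.card G) {γ : G}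
    (hγ : ∀ x : G, x ≠ 0 → ∃ n : ℕ, x = γ ^ n) : γ ≠ 0 := by
  rintro rfl
  have : Finite G := Nat.finite_of_card_ne_zero (by omega)
  have : Nontrivial Gˣ := Finite.one_lt_card_iff_nontrivial.mp (by rw [Nat.card_units]; omega)
  obtain ⟨u, hu⟩ := exists_ne (1 : Gˣ)
  obtain ⟨n, hn⟩ := hγ u u.ne_zero
  have hn0 : n ≠ 0 := by
    rintro rfl
    exact hu (Units.ext (by simpa using hn))
  exact u.ne_zero (hn.trans (zero_pow hn0))

theorem finrank_eq_of_natCard_eq_pow {K V : Type*} [Field K] [Finite K] [AddCommGroup V]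
    [Module K V] [Module.Finite K V] {n : ℕ} (h : Nat.card V = Nat.card K ^ n) :
    Module.finrank K V = n :=
  Nat.pow_right_injective Finite.one_lt_card (Module.natCard_eq_pow_finrank.symm.trans h)

theorem nonempty_galoisField_ringHom {p n m : ℕ} [Fact p.Prime] (hn : n ≠ 0) (hnm : n ∣ m)
    {F : Type*} [Field F] [Finite F] (hF : Nat.card F = p ^ m) :
    Nonempty (GaloisField p n →+* F) := by
  have := Fintype.ofFinite F
  have := charP_of_card_eq_prime_pow (Nat.card_eq_fintype_card.symm.trans hF)
  let := ZMod.algebra F p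
  have hrank : Module.finrank (ZMod p) F = m :=
    finrank_eq_of_natCard_eq_pow (by rw [hF, Nat.card_zmod])
  exact (FiniteField.nonempty_algHom_of_finrank_dvd
    (by rwa [GaloisField.finrank p hn, hrank])).map AlgHom.toRingHom

theorem norm_eq_of_algebraMap_eq_pow {F G : Type*} [Field F] [Field G] [Algebra F G] [Finite G]
    (hFG : Module.finrank F G = 2) {ω : F} {γ : G}
    (h : algebraMap F G ω = γ ^ (Nat.card F + 1)) : Algebra.norm F γ = ω := by
  apply (algebraMap F G).injective
  rw [h, FiniteField.algebraMap_norm_eq_prod_pow, hFG, Finset.prod_range_succ,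
    Finset.prod_range_one, pow_zero, pow_one, pow_one, pow_succ']

theorem statement15 (s : ℕ) (hs : 1 ≤ s) (F G : Type*) [Field F] [Fintype F] [Field G] [Fintype G]
    (hF : Fintype.card F = 2 ^ (3 * s)) (hG : Fintype.card G = 2 ^ (6 * s))
    (f : F →+* G) (γ : G) (hγ : ∀ x : G, x ≠ 0 → ∃ n : ℕ, x = γ ^ n)
    (ω : F) (hω : f ω = γ ^ (2 ^ (3 * s) + 1))
    (hωgen : ∀ x : F, x ≠ 0 → ∃ n : ℕ, x = ω ^ n) :
    (∀ x : G, ∃! k : Fin 4, x ∈ Rfam s ω γ k) ∧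
    ∃ p : Fin 4 → Fin 4 → Fin 4 → ℕ,
      ∀ k l m : Fin 4, ∀ d ∈ Rfam s ω γ m,
        {z : G | z ∈ Rfam s ω γ k ∧ d + z ∈ Rfam s ω γ l}.ncard = p k l m := by
  have hs0 : s ≠ 0 := by omega
  have : CharP F 2 := charP_of_card_eq_prime_pow hF
  rw [← Nat.card_eq_fintype_card] at hF hG
  let : Algebra F G := f.toAlgebra
  obtain ⟨e⟩ := nonempty_galoisField_ringHom hs0 (dvd_mul_left s 3) hF
  let : Algebra (GaloisField 2 s) F := e.toAlgebra
  have hE : Nat.card (GaloisField 2 s) = 2 ^ s := GaloisField.card 2 s hs0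
  have hEF : Module.finrank (GaloisField 2 s) F = 3 :=
    finrank_eq_of_natCard_eq_pow (by rw [hF, hE, ← pow_mul, mul_comm])
  have hFG : Module.finrank F G = 2 :=
    finrank_eq_of_natCard_eq_pow (by rw [hF, hG, ← pow_mul]; ring_nf)
  have hγ0 : γ ≠ 0 := ne_zero_of_forall_exists_eq_pow
    (by rw [hG]; exact lt_self_pow₀ one_lt_two (by omega)) hγ
  obtain rfl : Algebra.norm F γ = ω := norm_eq_of_algebraMap_eq_pow hFG (by rwa [hF])
  rw [Rfam_eq_normFactorClass hE hEF hγ0 hγ]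
  exact ⟨existsUnique_mem_normFactorClass hEF, exists_intersectionNumbers_normFactorClass hEF hFG⟩
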